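/- (Abstract form of the semilinear existence theorem of Section 3.) Let Y be a Banach space, T > 0, and let 𝔖 : [0,T] → (Y →L Y) be continuous in the operator norm with 𝔖(0) = id. Let U ⊆ Y be open, u₀ ∈ U, let C : [0,T] → [0,∞) be continuous, and let F : [0,T] × Y → Y be continuous and satisfy, for all t ∈ [0,T] and all v, v₁, v₂ ∈ U: ‖F(t,v)‖ ≤ C(t)(1 + ‖v‖) and ‖F(t,v₁) − F(t,v₂)‖ ≤ C(t)‖v₁ − v₂‖. Then there exists T′ ∈ (0,T] and a continuous function u : [0,T′] → Y with u(t) ∈ U for all t ∈ [0,T′] and u(t) = 𝔖(t)u₀ + ∫₀ᵗ 𝔖(t−s) F(s, u(s)) ds for all t ∈ [0,T′] (Bochner integral); moreover u is the unique continuous U-valued function on [0,T′] satisfying this integral equation. -/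

import Mathlib

open MeasureTheory

section Duhamel

variable {Y : Type*} [NormedAddCommGroup Y] [NormedSpace ℝ Y]

/-- The right-hand side of the variation of constants formula, as a map of the curve `w`. -/
noncomputable def duhamelMap (S : ℝ → Y →L[ℝ] Y) (G : ℝ → Y → Y) (u₀ : Y) (w : ℝ → Y)
    (t : ℝ) : Y :=
  S t u₀ + ∫ s in (0 : ℝ)..t, S (t - s) (G s (w s))

variable {S S' : ℝ → Y →L[ℝ] Y} {G G' : ℝ → Y → Y} {u₀ : Y} {w w₁ w₂ : ℝ → Y}

theorem continuous_duhamelMap (hS : Continuous S)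
    (hG : Continuous (fun p : ℝ × Y => G p.1 p.2)) (hw : Continuous w) :
    Continuous (duhamelMap S G u₀ w) := by
  have hint : Continuous (Function.uncurry fun t s : ℝ => S (t - s) (G s (w s))) :=
    (hS.comp (continuous_fst.sub continuous_snd)).clm_apply
      (hG.comp (continuous_snd.prodMk (hw.comp continuous_snd)))
  exact (hS.clm_apply continuous_const).add
    (intervalIntegral.continuous_parametric_intervalIntegral_of_continuous hint continuous_id)

theorem duhamelMap_congr {T t : ℝ} (hS : Set.EqOn S S' (Set.Icc 0 T))
    (hG : ∀ s ∈ Set.Icc 0 T, G s = G' s) (ht : t ∈ Set.Icc 0 T)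
    (hw : Set.EqOn w₁ w₂ (Set.Icc 0 t)) :
    duhamelMap S G u₀ w₁ t = duhamelMap S' G' u₀ w₂ t := by
  unfold duhamelMap
  rw [hS ht]
  congr 1
  refine intervalIntegral.integral_congr fun s hs => ?_
  rw [Set.uIcc_of_le ht.1] at hs
  have h₁ : t - s ∈ Set.Icc 0 T := ⟨by linarith [hs.2], by linarith [hs.1, ht.2]⟩
  have h₂ : s ∈ Set.Icc 0 T := ⟨hs.1, hs.2.trans ht.2⟩
  simp only [hS h₁, hG s h₂, hw hs]

theorem norm_duhamelMap_sub_le {M B a t : ℝ} (hM : ∀ t, ‖S t‖ ≤ M) (hB : 0 ≤ B)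
    (hGB : ∀ s ∈ Set.Icc 0 a, ‖G s (w s)‖ ≤ B) (ht : t ∈ Set.Icc 0 a) :
    ‖duhamelMap S G u₀ w t - S t u₀‖ ≤ M * B * a := by
  have hM0 : 0 ≤ M := (norm_nonneg _).trans (hM 0)
  have hb : ∀ s ∈ Set.uIoc 0 t, ‖S (t - s) (G s (w s))‖ ≤ M * B := fun s hs => by
    rw [Set.uIoc_of_le ht.1] at hs
    exact (S (t - s)).le_of_opNorm_le_of_le (hM _) (hGB s ⟨hs.1.le, hs.2.trans ht.2⟩)
  have h := intervalIntegral.norm_integral_le_of_norm_le_const hb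
  rw [sub_zero, abs_of_nonneg ht.1] at h
  simpa [duhamelMap] using h.trans (mul_le_mul_of_nonneg_left ht.2 (mul_nonneg hM0 hB))

theorem norm_duhamelMap_sub_duhamelMap_le {M D a t : ℝ} (hS : Continuous S)
    (hG : Continuous (fun p : ℝ × Y => G p.1 p.2)) (hw₁ : Continuous w₁) (hw₂ : Continuous w₂)
    (hM : ∀ t, ‖S t‖ ≤ M) (hD : 0 ≤ D)
    (hGD : ∀ s ∈ Set.Icc 0 a, ‖G s (w₁ s) - G s (w₂ s)‖ ≤ D) (ht : t ∈ Set.Icc 0 a) :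
    ‖duhamelMap S G u₀ w₁ t - duhamelMap S G u₀ w₂ t‖ ≤ M * D * a := by
  have hint : ∀ {w : ℝ → Y}, Continuous w →
      IntervalIntegrable (fun s => S (t - s) (G s (w s))) volume 0 t := fun hw =>
    ((hS.comp (continuous_const.sub continuous_id)).clm_apply
      (hG.comp (continuous_id.prodMk hw))).intervalIntegrable _ _
  have h := norm_duhamelMap_sub_le (G := fun s _ => G s (w₁ s) - G s (w₂ s)) (w := w₁)
    (u₀ := u₀) hM hD hGD ht
  simpa [duhamelMap, intervalIntegral.integral_sub (hint hw₁) (hint hw₂)] using h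

/-- Existence of a mild solution with values in a closed ball, by the contraction principle. -/
theorem exists_eqOn_duhamelMap [CompleteSpace Y] {M B K a r : ℝ} (hS : Continuous S)
    (hG : Continuous (fun p : ℝ × Y => G p.1 p.2)) (hM : ∀ t, ‖S t‖ ≤ M) (hB : 0 ≤ B)
    (hK : 0 ≤ K) (ha : 0 ≤ a) (hr : 0 ≤ r)
    (hGB : ∀ s, ∀ v ∈ Metric.closedBall u₀ r, ‖G s v‖ ≤ B)
    (hGK : ∀ s, ∀ v₁ ∈ Metric.closedBall u₀ r, ∀ v₂ ∈ Metric.closedBall u₀ r,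
      ‖G s v₁ - G s v₂‖ ≤ K * ‖v₁ - v₂‖)
    (hSa : ∀ t ∈ Set.Icc 0 a, ‖S t u₀ - u₀‖ ≤ r / 2)
    (haB : M * B * a ≤ r / 2) (haK : M * K * a ≤ 1 / 2) :
    ∃ u : ℝ → Y, Continuous u ∧ (∀ t, u t ∈ Metric.closedBall u₀ r) ∧
      Set.EqOn u (duhamelMap S G u₀ u) (Set.Icc 0 a) := by
  let X : Set C(Set.Icc 0 a, Y) := {f | ∀ t, f t ∈ Metric.closedBall u₀ r}
  have hXclosed : IsClosed X := by
    simp only [X, Set.ofPred_forall]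
    exact isClosed_iInter fun t =>
      Metric.isClosed_closedBall.preimage (continuous_eval_const t)
  have : CompleteSpace X := hXclosed.completeSpace_coe
  have : Nonempty X := ⟨⟨ContinuousMap.const _ u₀, fun _ => Metric.mem_closedBall_self hr⟩⟩
  let ext : X → ℝ → Y := fun f => Set.IccExtend ha f.1
  have hext : ∀ f, Continuous (ext f) := fun f => f.1.continuous.Icc_extend'
  have hmem : ∀ f t, ext f t ∈ Metric.closedBall u₀ r := fun f t => f.2 _
  let Φ : X → X := fun f =>
    ⟨⟨fun t => duhamelMap S G u₀ (ext f) t,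
      (continuous_duhamelMap hS hG (hext f)).comp continuous_subtype_val⟩, fun t => by
      have h := norm_duhamelMap_sub_le (u₀ := u₀) hM hB (fun s _ => hGB s _ (hmem f s)) t.2
      rw [mem_closedBall_iff_norm]
      calc ‖duhamelMap S G u₀ (ext f) t - u₀‖
          ≤ ‖duhamelMap S G u₀ (ext f) t - S t u₀‖ + ‖S t u₀ - u₀‖ :=
            norm_sub_le_norm_sub_add_norm_sub _ _ _
        _ ≤ r := by linarith [hSa t t.2]⟩
  have hΦ : ContractingWith (1 / 2) Φ := by
    refine ⟨by rw [← NNReal.coe_lt_coe]; norm_num, LipschitzWith.of_dist_le_mul fun f g => ?_⟩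
    rw [Subtype.dist_eq, ContinuousMap.dist_le (by positivity)]
    intro t
    have hD : ∀ s ∈ Set.Icc 0 a, ‖G s (ext f s) - G s (ext g s)‖ ≤ K * dist f g := fun s _ =>
      (hGK s _ (hmem f s) _ (hmem g s)).trans <| mul_le_mul_of_nonneg_left
        (by rw [← dist_eq_norm]; exact ContinuousMap.dist_apply_le_dist _) hK
    have h := norm_duhamelMap_sub_duhamelMap_le (u₀ := u₀) hS hG (hext f) (hext g) hM
      (by positivity) hD t.2
    rw [dist_eq_norm]
    refine h.trans ?_
    have := mul_le_mul_of_nonneg_right haK (dist_nonneg (x := f) (y := g))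
    push_cast
    linarith
  obtain ⟨f, hf⟩ : ∃ f, Φ f = f := ⟨_, hΦ.fixedPoint_isFixedPt⟩
  refine ⟨ext f, hext f, hmem f, fun t ht => ?_⟩
  calc ext f t = f.1 ⟨t, ht⟩ := Set.IccExtend_of_mem _ _ ht
    _ = (Φ f).1 ⟨t, ht⟩ := by rw [hf]

/-- Uniqueness of mild solutions on short time intervals. -/
theorem eqOn_of_eqOn_duhamelMap {U : Set Y} {M K a : ℝ} (hS : Continuous S)
    (hG : Continuous (fun p : ℝ × Y => G p.1 p.2)) (hM : ∀ t, ‖S t‖ ≤ M)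
    (hK : 0 ≤ K) (ha : 0 ≤ a)
    (hGK : ∀ s, ∀ v₁ ∈ U, ∀ v₂ ∈ U, ‖G s v₁ - G s v₂‖ ≤ K * ‖v₁ - v₂‖)
    (haK : M * K * a ≤ 1 / 2) (hw₁ : Continuous w₁) (hw₂ : Continuous w₂)
    (hU₁ : ∀ t ∈ Set.Icc 0 a, w₁ t ∈ U) (hU₂ : ∀ t ∈ Set.Icc 0 a, w₂ t ∈ U)
    (h₁ : Set.EqOn w₁ (duhamelMap S G u₀ w₁) (Set.Icc 0 a))
    (h₂ : Set.EqOn w₂ (duhamelMap S G u₀ w₂) (Set.Icc 0 a)) :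
    Set.EqOn w₁ w₂ (Set.Icc 0 a) := by
  obtain ⟨m, hm, hmax⟩ := isCompact_Icc.exists_isMaxOn (Set.nonempty_Icc.2 ha)
    (hw₁.sub hw₂).norm.continuousOn
  have hmax' : ∀ s ∈ Set.Icc 0 a, ‖w₁ s - w₂ s‖ ≤ ‖w₁ m - w₂ m‖ := fun s hs => hmax hs
  have h := norm_duhamelMap_sub_duhamelMap_le (u₀ := u₀) hS hG hw₁ hw₂ hM
    (D := K * ‖w₁ m - w₂ m‖) (by positivity)
    (fun s hs => (hGK s _ (hU₁ s hs) _ (hU₂ s hs)).trans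
      (mul_le_mul_of_nonneg_left (hmax' s hs) hK)) hm
  rw [← h₁ hm, ← h₂ hm] at h
  have := mul_le_mul_of_nonneg_right haK (norm_nonneg (w₁ m - w₂ m))
  intro t ht
  have := hmax' t ht
  exact sub_eq_zero.1 (norm_le_zero_iff.1 (by linarith))

end Duhamel

/-- Abstract form of the semilinear existence theorem of Section 3: given a
norm-continuous propagator `𝔖` on `[0,T]` with `𝔖(0) = id`, an open set `U ∋ u₀`,
and a continuous `F` which on `U` is bounded by `C(t)(1+‖v‖)` and Lipschitz with
constant `C(t)`, there exist `T′ ∈ (0,T]` and a unique continuous `U`-valued mild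
solution `u(t) = 𝔖(t)u₀ + ∫₀ᵗ 𝔖(t−s)F(s,u(s)) ds` on `[0,T′]`. -/
theorem semilinear_existence_uniqueness
    {Y : Type*} [NormedAddCommGroup Y] [NormedSpace ℝ Y] [CompleteSpace Y]
    (T : ℝ) (hT : 0 < T)
    (𝔖 : ℝ → Y →L[ℝ] Y)
    (h𝔖cont : ContinuousOn 𝔖 (Set.Icc 0 T))
    (h𝔖0 : 𝔖 0 = ContinuousLinearMap.id ℝ Y)
    (U : Set Y) (hU : IsOpen U) (u₀ : Y) (hu₀ : u₀ ∈ U)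
    (C : ℝ → ℝ) (hCcont : ContinuousOn C (Set.Icc 0 T))
    (hCnonneg : ∀ t ∈ Set.Icc (0 : ℝ) T, 0 ≤ C t)
    (F : ℝ → Y → Y)
    (hFcont : ContinuousOn (fun p : ℝ × Y => F p.1 p.2) (Set.Icc 0 T ×ˢ Set.univ))
    (hFbd : ∀ t ∈ Set.Icc (0 : ℝ) T, ∀ v ∈ U, ‖F t v‖ ≤ C t * (1 + ‖v‖))
    (hFlip : ∀ t ∈ Set.Icc (0 : ℝ) T, ∀ v₁ ∈ U, ∀ v₂ ∈ U,
      ‖F t v₁ - F t v₂‖ ≤ C t * ‖v₁ - v₂‖) :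
    ∃ T' : ℝ, T' ∈ Set.Ioc 0 T ∧
      ∃ u : ℝ → Y,
        ContinuousOn u (Set.Icc 0 T') ∧
        (∀ t ∈ Set.Icc (0 : ℝ) T', u t ∈ U) ∧
        (∀ t ∈ Set.Icc (0 : ℝ) T',
          u t = 𝔖 t u₀ + ∫ s in (0 : ℝ)..t, 𝔖 (t - s) (F s (u s))) ∧
        ∀ v : ℝ → Y,
          ContinuousOn v (Set.Icc 0 T') →
          (∀ t ∈ Set.Icc (0 : ℝ) T', v t ∈ U) →
          (∀ t ∈ Set.Icc (0 : ℝ) T',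
            v t = 𝔖 t u₀ + ∫ s in (0 : ℝ)..t, 𝔖 (t - s) (F s (v s))) →
          ∀ t ∈ Set.Icc (0 : ℝ) T', v t = u t := by
  obtain ⟨M, hM⟩ := isCompact_Icc.exists_bound_of_continuousOn h𝔖cont
  obtain ⟨K, hK⟩ := isCompact_Icc.exists_bound_of_continuousOn hCcont
  have h0 : (0 : ℝ) ∈ Set.Icc 0 T := Set.left_mem_Icc.2 hT.le
  have hM0 : 0 ≤ M := (norm_nonneg _).trans (hM 0 h0)
  have hK0 : 0 ≤ K := (norm_nonneg _).trans (hK 0 h0)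
  have hCK : ∀ t ∈ Set.Icc 0 T, C t ≤ K := fun t ht => (le_abs_self _).trans (hK t ht)
  obtain ⟨r, hr, hrU⟩ := Metric.nhds_basis_closedBall.mem_iff.1 (hU.mem_nhds hu₀)
  let π : ℝ → ℝ := fun t => Set.projIcc 0 T hT.le t
  have hπ : Continuous π := continuous_subtype_val.comp continuous_projIcc
  have hπmem : ∀ t, π t ∈ Set.Icc 0 T := fun t => Subtype.property _
  have hπeq : ∀ t ∈ Set.Icc 0 T, π t = t := fun t ht => by simp [π, Set.projIcc_of_mem _ ht]
  let S : ℝ → Y →L[ℝ] Y := fun t => 𝔖 (π t)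
  let G : ℝ → Y → Y := fun t => F (π t)
  have hS : Continuous S := h𝔖cont.comp_continuous hπ hπmem
  have hG : Continuous fun p : ℝ × Y => G p.1 p.2 :=
    hFcont.comp_continuous ((hπ.comp continuous_fst).prodMk continuous_snd)
      fun p => ⟨hπmem _, Set.mem_univ _⟩
  have hSeq : Set.EqOn S 𝔖 (Set.Icc 0 T) := fun t ht => by simp only [S, hπeq t ht]
  have hGeq : ∀ s ∈ Set.Icc 0 T, G s = F s := fun s hs => by simp only [G, hπeq s hs]
  have hSM : ∀ t, ‖S t‖ ≤ M := fun t => hM _ (hπmem t)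
  have hGK : ∀ s, ∀ v₁ ∈ U, ∀ v₂ ∈ U, ‖G s v₁ - G s v₂‖ ≤ K * ‖v₁ - v₂‖ :=
    fun s v₁ h₁ v₂ h₂ => (hFlip _ (hπmem s) v₁ h₁ v₂ h₂).trans
      (mul_le_mul_of_nonneg_right (hCK _ (hπmem s)) (norm_nonneg _))
  set B : ℝ := K * (1 + (‖u₀‖ + r))
  have hGB : ∀ s, ∀ v ∈ Metric.closedBall u₀ r, ‖G s v‖ ≤ B := fun s v hv =>
    (hFbd _ (hπmem s) v (hrU hv)).trans <| mul_le_mul (hCK _ (hπmem s))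
      (by linarith [norm_le_of_mem_closedBall hv]) (by positivity) hK0
  obtain ⟨a, ha, haT, hSa, haB, haK⟩ : ∃ a : ℝ, 0 < a ∧ a ≤ T ∧
      (∀ t ∈ Set.Icc 0 a, ‖S t u₀ - u₀‖ ≤ r / 2) ∧ M * B * a ≤ r / 2 ∧ M * K * a ≤ 1 / 2 := by
    have hc : Continuous fun t => ‖S t u₀ - u₀‖ :=
      ((hS.clm_apply continuous_const).sub continuous_const).norm
    have hS0 : ‖S 0 u₀ - u₀‖ = 0 := by simp [hSeq h0, h𝔖0]
    have e₁ : ∀ᶠ t in nhds (0 : ℝ), ‖S t u₀ - u₀‖ < r / 2 :=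
      hc.continuousAt.eventually_lt continuousAt_const (by rw [hS0]; positivity)
    have e₂ : ∀ᶠ t in nhds (0 : ℝ), M * B * t < r / 2 :=
      (by fun_prop : Continuous fun t : ℝ => M * B * t).continuousAt.eventually_lt
        continuousAt_const (by simpa using hr)
    have e₃ : ∀ᶠ t in nhds (0 : ℝ), M * K * t < 1 / 2 :=
      (by fun_prop : Continuous fun t : ℝ => M * K * t).continuousAt.eventually_lt
        continuousAt_const (by norm_num)
    obtain ⟨δ, hδ, h⟩ := Metric.nhds_basis_closedBall.mem_iff.1
      ((e₁.and (e₂.and e₃)).and (eventually_le_nhds hT))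
    have hmem : ∀ t ∈ Set.Icc 0 δ, t ∈ Metric.closedBall (0 : ℝ) δ := fun t ht => by
      simpa [abs_of_nonneg ht.1] using ht.2
    have hδ' := h (hmem δ ⟨hδ.le, le_rfl⟩)
    exact ⟨δ, hδ, hδ'.2, fun t ht => (h (hmem t ht)).1.1.le, hδ'.1.2.1.le, hδ'.1.2.2.le⟩
  have hcongr : ∀ (v w : ℝ → Y), Set.EqOn v w (Set.Icc 0 a) → ∀ t ∈ Set.Icc 0 a,
      duhamelMap S G u₀ v t = duhamelMap 𝔖 F u₀ w t := fun v w hvw t ht =>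
    duhamelMap_congr hSeq hGeq ⟨ht.1, ht.2.trans haT⟩
      (hvw.mono (Set.Icc_subset_Icc_right ht.2))
  obtain ⟨u, hu, hur, hueq⟩ := exists_eqOn_duhamelMap hS hG hSM (by positivity) hK0 ha.le hr.le
    hGB (fun s v₁ h₁ v₂ h₂ => hGK s v₁ (hrU h₁) v₂ (hrU h₂)) hSa haB haK
  refine ⟨a, ⟨ha, haT⟩, u, hu.continuousOn, fun t _ => hrU (hur t), fun t ht =>
    (hueq ht).trans (hcongr u u (Set.eqOn_refl _ _) t ht), fun v hv hvU hveq t ht => ?_⟩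
  let w : ℝ → Y := Set.IccExtend ha.le ((Set.Icc 0 a).domRestrict v)
  have hwv : Set.EqOn w v (Set.Icc 0 a) := fun s hs => Set.IccExtend_of_mem _ _ hs
  have hw : Continuous w := hv.domRestrict.Icc_extend'
  rw [← hwv ht]
  exact eqOn_of_eqOn_duhamelMap hS hG hSM hK0 ha.le hGK haK hw hu
    (fun s hs => (hwv hs).symm ▸ hvU s hs) (fun s _ => hrU (hur s))
    (fun s hs => (hwv hs).trans ((hveq s hs).trans (hcongr w v hwv s hs).symm)) hueq ht
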